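/- Let (A,b) be a unital curved A∞-algebra over a field k of characteristic 0 and Ā = A/k·1_A. The map S_{312}∘(1_A⊗Δ_{BĀ}) : A⊗BĀ → BĀ⊗A⊗BĀ, which sends a⊗[a_1|…|a_n] to Σ_{i=0}^{n}(−1)^{(ε_i+|a|)(ε_n−ε_i)}[a_{i+1}|…|a_n]⊗a⊗[a_1|…|a_i] with ε_i = Σ_{r=1}^{i}(|a_r|−1), is injective, and its image is exactly Φ(A) := Ker(Δ^R − S_{2341}∘Δ^L). -/

import Mathlib

open Finsupp
open scoped Classical

namespace NC

variable (S : Type) [CommRing S] {κ : Type}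

/-- The sign `(−1)^n` for `n : ℤ`. -/
noncomputable def sgn (n : ℤ) : S := if Even n then 1 else -1

/-- Degree of a basis element of `A` (the unit `none` = `1_A` has degree `0`). -/
def dgO (dg : κ → ℤ) : Option κ → ℤ := fun x => x.elim 0 dg

/-- `A`: a graded vector space with homogeneous basis `Option κ` (`none` = the unit `1_A`,
`some x` of degree `dg x`). -/
abbrev Avs (κ : Type) (S : Type) [CommRing S] := Option κ →₀ S

/-- Hochschild chains `C_•(A) = A ⊗ B(Ā)`, with basis `a₀ ⊗ [a₁|…|aₙ]`
(`a₀` a basis element of `A`, the `aᵢ` basis elements of `Ā`). -/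
abbrev Cch (κ : Type) (S : Type) [CommRing S] := (Option κ × List κ) →₀ S

variable (dg : κ → ℤ)

/-- `ε` of a list of `A`-basis elements: `Σ (|a|−1)`. -/
def epsO : List (Option κ) → ℤ := fun ls => (ls.map fun x => dgO dg x - 1).sum

/-- `ε` of a list of `Ā`-basis elements: `εᵢ = Σ_{r≤i} (|a_r|−1)`. -/
def epsK : List κ → ℤ := fun ms => (ms.map fun x => dg x - 1).sum

/-- `μ_j = |a₀|−1+ε_j`. -/
def muK (a₀ : Option κ) (ms : List κ) (j : ℕ) : ℤ :=
  dgO dg a₀ - 1 + epsK dg (ms.take j)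

/-- A (component family of a) Hochschild cochain is a function on basis words; `HasArity P p`
says it is concentrated in arity `p`. -/
def HasArity (P : List (Option κ) → Avs κ S) (p : ℕ) : Prop :=
  ∀ ls, ls.length ≠ p → P ls = 0

/-- Normalized cochain: vanishes as soon as one entry is the unit `1_A`. -/
def IsNormalized (P : List (Option κ) → Avs κ S) : Prop :=
  ∀ ls, none ∈ ls → P ls = 0

/-- Homogeneous of degree `dP` in `C^•(A)`: `P[a₁|…|aₚ]` has degree `Σ(|aᵢ|−1) + dP`. -/
def IsHomog (P : List (Option κ) → Avs κ S) (dP : ℤ) : Prop :=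
  ∀ ls x, x ∈ (P ls).support → dgO dg x = epsO dg ls + dP

/-- Multilinear insertion of a general vector of `A` into a slot of a cochain. -/
noncomputable def insEval (P : List (Option κ) → Avs κ S) (pre : List (Option κ))
    (v : Avs κ S) (post : List (Option κ)) : Avs κ S :=
  v.sum fun x c => c • P (pre ++ x :: post)

/-- The Gerstenhaber insertion `P∘Q`, the inner cochain `Q` being of `C^•`-degree `dQ`:
`(P∘Q)[a₁|…|aₙ] = Σ (−1)^{(|Q|−1)ε_i} P[a₁|…|a_i|Q[a_{i+1}|…|a_{i+v}]|…|aₙ]`. -/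
noncomputable def circC (P Q : List (Option κ) → Avs κ S) (dQ : ℤ) :
    List (Option κ) → Avs κ S := fun ls =>
  ∑ i ∈ Finset.range (ls.length + 1), ∑ v ∈ Finset.range (ls.length + 1),
    if i + v ≤ ls.length then
      sgn S ((dQ - 1) * epsO dg (ls.take i)) •
        insEval S P (ls.take i) (Q ((ls.drop i).take v)) (ls.drop (i + v))
    else 0

/-- Gerstenhaber bracket `[P,Q] = P∘Q − (−1)^{(|P|−1)(|Q|−1)} Q∘P`. -/
noncomputable def gBr (P Q : List (Option κ) → Avs κ S) (dP dQ : ℤ) :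
    List (Option κ) → Avs κ S := fun ls =>
  circC S dg P Q dQ ls - sgn S ((dP - 1) * (dQ - 1)) • circC S dg Q P dP ls

/-- `v ⊗ [ms]` for a general vector `v` of `A` in the module slot of `C_•(A)`. -/
noncomputable def genA (v : Avs κ S) (ms : List κ) : Cch κ S :=
  v.sum fun x c => Finsupp.single (x, ms) c

/-- `a₀ ⊗ [pre | v̄ | post]` for a general vector `v` of `A` inserted in a bar slot (the class
of the unit `1_A` in `Ā = A/k·1_A` being zero). -/
noncomputable def genBar (a₀ : Option κ) (pre : List κ) (v : Avs κ S) (post : List κ) :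
    Cch κ S :=
  v.sum fun x c => Option.elim x 0 fun y => Finsupp.single (a₀, pre ++ y :: post) c

/-- The value of the operator `L_P` on the generator `a₀ ⊗ [a₁|…|aₙ]`:
`L_P(a₀⊗[a₁|…|aₙ]) = Σ (−1)^{(|P|−1)μ_j} a₀⊗[a₁|…|a_j|P[a_{j+1}|…|a_{j+l}]|…|aₙ]
 + Σ (−1)^{μ_i(μ_n−μ_i)} s⁻¹P([a_{i+1}|…|aₙ|a₀|…|a_j]) ⊗ [a_{j+1}|…|a_i]`
(the second sum over the cyclic terms in which `P` includes `a₀`). -/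
noncomputable def Lgen (P : List (Option κ) → Avs κ S) (dP : ℤ)
    (a₀ : Option κ) (ms : List κ) : Cch κ S :=
  (∑ j ∈ Finset.range (ms.length + 1), ∑ l ∈ Finset.range (ms.length + 1),
    if j + l ≤ ms.length then
      sgn S ((dP - 1) * muK dg a₀ ms j) •
        genBar S a₀ (ms.take j) (P (((ms.drop j).take l).map some)) (ms.drop (j + l))
    else 0)
  + ∑ i ∈ Finset.range (ms.length + 1), ∑ j ∈ Finset.range (ms.length + 1),
      if j ≤ i then
        sgn S (muK dg a₀ ms i * (muK dg a₀ ms ms.length - muK dg a₀ ms i)) •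
          genA S (P ((ms.drop i).map some ++ a₀ :: (ms.take j).map some))
            ((ms.drop j).take (i - j))
      else 0

/-- The operator `L_P : C_•(A) → C_•(A)` associated to a cochain `P` of `C^•`-degree `dP`. -/
noncomputable def Lop (P : List (Option κ) → Avs κ S) (dP : ℤ) : Cch κ S →ₗ[S] Cch κ S :=
  Finsupp.lift (Cch κ S) S (Option κ × List κ) fun g => Lgen S dg P dP g.1 g.2

/-- The Hochschild boundary `∂_Hoch` of the (curved) A∞-structure `b` (a degree `2` cochain):
it is given on generators by exactly the formula `L_b`. -/
noncomputable def hochOp (b : List (Option κ) → Avs κ S) : Cch κ S →ₗ[S] Cch κ S :=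
  Lop S dg b 2

/-- `a ⊗ [ls]` where the bar entries are allowed to be unit basis elements (which die in
`Ā`). -/
noncomputable def genO (a : Option κ) (ls : List (Option κ)) : Cch κ S :=
  if none ∈ ls then 0 else Finsupp.single (a, ls.reduceOption) 1

/-- Connes' operator `B` on generators:
`B(a₀⊗[a₁|…|aₙ]) = Σᵢ (−1)^{(ε_{i−1}+|a₀|−1)(ε_n−ε_{i−1})} 1_A⊗[a_i|…|aₙ|a₀|a₁|…|a_{i−1}]`. -/
noncomputable def Bgen (a₀ : Option κ) (ms : List κ) : Cch κ S :=
  ∑ i ∈ Finset.range (ms.length + 1),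
    sgn S ((epsK dg (ms.take (i - 1)) + dgO dg a₀ - 1) *
        (epsK dg ms - epsK dg (ms.take (i - 1)))) •
      genO S none (((a₀ :: ms.map some).drop i) ++ ((a₀ :: ms.map some).take i))

/-- Connes' operator `B : C_•(A) → C_•(A)`. -/
noncomputable def Bop : Cch κ S →ₗ[S] Cch κ S :=
  Finsupp.lift (Cch κ S) S (Option κ × List κ) fun g => Bgen S dg g.1 g.2

/-- A unital curved A∞-structure on `A` (components `b` of the degree `1` coderivation `b` of
`BA`, written with values in `A`): homogeneity, `b∘b = 0`, and the unit axioms. -/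
structure IsUnitalCurvedAInf (b : List (Option κ) → Avs κ S) : Prop where
  homog : IsHomog S dg b 2
  sq : ∀ ls, circC S dg b b 2 ls = 0
  unit1 : b [none] = 0
  unitR : ∀ x : Option κ, b [x, none] = sgn S (dgO dg x) • Finsupp.single x 1
  unitL : ∀ x : Option κ, b [none, x] = Finsupp.single x 1
  unitHi : ∀ ls, 3 ≤ ls.length → none ∈ ls → b ls = 0

/-- A unital A∞-structure: a unital curved A∞-structure with `b₀ = 0`. -/
structure IsUnitalAInf (b : List (Option κ) → Avs κ S) extends
    IsUnitalCurvedAInf S dg b : Prop where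
  curv0 : b [] = 0

end NC

namespace NC

variable (S : Type) [CommRing S] {κ : Type} (dg : κ → ℤ)

/-- `B(Ā) ⊗ A ⊗ B(Ā)`. -/
abbrev Tch' (κ : Type) (S : Type) [CommRing S] := (List κ × Option κ × List κ) →₀ S

/-- `(B(Ā) ⊗ A ⊗ B(Ā)) ⊗ B(Ā)`. -/
abbrev T4 (κ : Type) (S : Type) [CommRing S] := (List κ × Option κ × List κ × List κ) →₀ S

/-- The right coaction `Δ^R = 1⊗1⊗Δ : BĀ⊗A⊗BĀ → (BĀ⊗A⊗BĀ)⊗BĀ`. -/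
noncomputable def coactR : Tch' κ S →ₗ[S] T4 κ S :=
  Finsupp.lift (T4 κ S) S (List κ × Option κ × List κ) fun g =>
    ∑ i ∈ Finset.range (g.2.2.length + 1),
      Finsupp.single (g.1, g.2.1, g.2.2.take i, g.2.2.drop i) 1

/-- `S_{2341} ∘ Δ^L : BĀ⊗A⊗BĀ → (BĀ⊗A⊗BĀ)⊗BĀ`, with the Koszul sign of the symmetry
moving the first `BĀ`-factor past `BĀ⊗A⊗BĀ`. -/
noncomputable def coactLS : Tch' κ S →ₗ[S] T4 κ S :=
  Finsupp.lift (T4 κ S) S (List κ × Option κ × List κ) fun g =>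
    ∑ i ∈ Finset.range (g.1.length + 1),
      sgn S (epsK dg (g.1.take i) *
          (epsK dg (g.1.drop i) + dgO dg g.2.1 + epsK dg g.2.2)) •
        Finsupp.single (g.1.drop i, g.2.1, g.2.2, g.1.take i) 1

/-- `S_{312} ∘ (1_A ⊗ Δ_{BĀ}) : A ⊗ B(Ā) → B(Ā) ⊗ A ⊗ B(Ā)`,
`a⊗[a₁|…|aₙ] ↦ Σᵢ (−1)^{(ε_i+|a|)(ε_n−ε_i)} [a_{i+1}|…|aₙ]⊗a⊗[a₁|…|a_i]`. -/
noncomputable def iotaMap' : Cch κ S →ₗ[S] Tch' κ S :=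
  Finsupp.lift (Tch' κ S) S (Option κ × List κ) fun g =>
    ∑ i ∈ Finset.range (g.2.length + 1),
      sgn S ((epsK dg (g.2.take i) + dgO dg g.1) * (epsK dg g.2 - epsK dg (g.2.take i))) •
        Finsupp.single (g.2.drop i, g.1, g.2.take i) 1

end NC

/-!
The coefficient of `Δ^R f` at `[]⊗a⊗[y]⊗[z]` is that of `f` at `[]⊗a⊗[y|z]`, while the coefficient
of `S_{2341} Δ^L f` there is, up to sign, that of `f` at `[z]⊗a⊗[y]`. So an element `f` of `Φ(A)` is
determined by its coefficients at the `[]⊗a⊗[w]`: the map `η⊗1⊗1`, for `η : BĀ → k` the counit, is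
inverse to `S_{312}∘(1⊗Δ)` on `Φ(A)`.
-/

namespace NC

section Deconcatenation

theorem take_eq_and_drop_eq_iff {α : Type*} {w y z : List α} {i : ℕ} (hi : i ≤ w.length) :
    w.take i = y ∧ w.drop i = z ↔ w = y ++ z ∧ i = y.length := by
  constructor
  · rintro ⟨rfl, rfl⟩
    simp [hi]
  · rintro ⟨rfl, rfl⟩
    simp

theorem sum_range_take_drop_eq_ite {α M : Type*} [AddCommMonoid M] (w : List α) {y z : List α}
    {F : List α → List α → M} (hF : ∀ p q, ¬(p = y ∧ q = z) → F p q = 0)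
    [Decidable (w = y ++ z)] :
    ∑ i ∈ Finset.range (w.length + 1), F (w.take i) (w.drop i) =
      if w = y ++ z then F y z else 0 := by
  split_ifs with hw
  · subst hw
    rw [Finset.sum_eq_single y.length]
    · simp
    · intro i hi hne
      refine hF _ _ fun h => hne ?_
      exact ((take_eq_and_drop_eq_iff (Finset.mem_range_succ_iff.mp hi)).mp h).2
    · simp
  · refine Finset.sum_eq_zero fun i hi => hF _ _ fun h => hw ?_
    exact ((take_eq_and_drop_eq_iff (Finset.mem_range_succ_iff.mp hi)).mp h).1

variable {R α X Y G : Type*} [Semiring R]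

theorem sum_smul_single_take_drop_apply {e : X × List α × List α → Y} (he : e.Injective)
    (c : X × List α × List α → R) (x x' : X) (w y z : List α) :
    (∑ i ∈ Finset.range (w.length + 1),
        c (x', w.take i, w.drop i) • single (e (x', w.take i, w.drop i)) (1 : R)) (e (x, y, z)) =
      single (x, y ++ z) (c (x, y, z)) (x', w) := by
  have coeff_eq_zero (p q : List α) (hpq : ¬(p = y ∧ q = z)) :
      (c (x', p, q) • single (e (x', p, q)) (1 : R)) (e (x, y, z)) = 0 := by
    rw [Finsupp.smul_apply, single_eq_of_ne' (he.ne (by grind)), smul_zero]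
  rw [finsetSum_apply, sum_range_take_drop_eq_ite w coeff_eq_zero]
  simp only [Finsupp.smul_apply, smul_eq_mul, single_apply, he.eq_iff, Prod.mk.injEq]
  grind

/-- The equivalence `φ` singles out the tensor factor of a generator that is deconcatenated. -/
theorem lift_deconcatenation_apply {e : X × List α × List α → Y} (he : e.Injective)
    (φ : X × List α ≃ G) {F : G → Y →₀ R} (c : X × List α × List α → R)
    (hF : ∀ x w, F (φ (x, w)) = ∑ i ∈ Finset.range (w.length + 1),
      c (x, w.take i, w.drop i) • single (e (x, w.take i, w.drop i)) 1)
    (f : G →₀ R) (x : X) (y z : List α) :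
    Finsupp.lift (Y →₀ R) R G F f (e (x, y, z)) = f (φ (x, y ++ z)) * c (x, y, z) := by
  have coeff (g : G) : F g (e (x, y, z)) = single (φ (x, y ++ z)) (c (x, y, z)) g := by
    obtain ⟨⟨x', w⟩, rfl⟩ := φ.surjective g
    rw [hF, sum_smul_single_take_drop_apply he, single_apply, single_apply]
    simp only [φ.apply_eq_iff_eq]
  rw [Finsupp.lift_apply, Finsupp.sum_apply]
  simp only [Finsupp.smul_apply, coeff, smul_eq_mul, single_apply, mul_ite, mul_zero]
  rw [Finsupp.sum_ite_eq, ite_eq_left_iff, notMem_support_iff]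
  intro hf
  rw [hf, zero_mul]

end Deconcatenation

variable {S : Type} [CommRing S] {κ : Type} (dg : κ → ℤ)

theorem sgn_zero : sgn S 0 = 1 := by
  simp [sgn]

theorem sgn_add (m n : ℤ) : sgn S (m + n) = sgn S m * sgn S n := by
  by_cases hm : Even m <;> by_cases hn : Even n <;> simp [sgn, hm, hn, Int.even_add]

theorem sgn_congr {m n : ℤ} (h : Even (m - n)) : sgn S m = sgn S n := by
  simp [sgn, Int.even_sub.mp h]

theorem epsK_nil : epsK dg [] = 0 := rfl

theorem epsK_append (y z : List κ) : epsK dg (y ++ z) = epsK dg y + epsK dg z := by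
  simp [epsK]

theorem epsK_sub_epsK_take (w : List κ) (i : ℕ) :
    epsK dg w - epsK dg (w.take i) = epsK dg (w.drop i) := by
  rw [sub_eq_iff_eq_add', ← epsK_append, List.take_append_drop]

theorem iotaMap'_apply (f : Cch κ S) (z : List κ) (a : Option κ) (y : List κ) :
    iotaMap' S dg f (z, a, y) =
      sgn S ((epsK dg y + dgO dg a) * epsK dg z) * f (a, y ++ z) := by
  refine (lift_deconcatenation_apply (e := fun (a, y, z) => (z, a, y)) ?_ (Equiv.refl _)
    (fun (a, y, z) => sgn S ((epsK dg y + dgO dg a) * epsK dg z)) ?_ f a y z).trans (mul_comm _ _)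
  · rintro ⟨a, y, z⟩ ⟨a', y', z'⟩ h
    grind
  · simp only [Equiv.refl_apply, epsK_sub_epsK_take, implies_true]

theorem coactR_apply (f : Tch' κ S) (x : List κ) (a : Option κ) (y z : List κ) :
    coactR S f (x, a, y, z) = f (x, a, y ++ z) := by
  refine (lift_deconcatenation_apply (e := fun ((x, a), y, z) => (x, a, y, z)) ?_
    (Equiv.prodAssoc _ _ _) (fun _ => 1) ?_ f (x, a) y z).trans (mul_one _)
  · rintro ⟨⟨x, a⟩, y, z⟩ ⟨⟨x', a'⟩, y', z'⟩ h
    grind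
  · simp only [Equiv.prodAssoc_apply, one_smul, implies_true]

theorem coactLS_apply (f : Tch' κ S) (x : List κ) (a : Option κ) (y z : List κ) :
    coactLS S dg f (x, a, y, z) =
      sgn S (epsK dg z * (epsK dg x + dgO dg a + epsK dg y)) * f (z ++ x, a, y) := by
  refine (lift_deconcatenation_apply (e := fun ((a, y), z, x) => (x, a, y, z)) ?_
    (Equiv.prodComm _ _)
    (fun ((a, y), z, x) => sgn S (epsK dg z * (epsK dg x + dgO dg a + epsK dg y)))
    ?_ f (a, y) z x).trans (mul_comm _ _)
  · rintro ⟨⟨a, y⟩, z, x⟩ ⟨⟨a', y'⟩, z', x'⟩ h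
    grind
  · simp only [Equiv.prodComm_apply, Prod.swap_prod_mk, implies_true]

theorem coactR_iotaMap' (f : Cch κ S) :
    coactR S (iotaMap' S dg f) = coactLS S dg (iotaMap' S dg f) := by
  ext ⟨x, a, y, z⟩
  rw [coactR_apply, coactLS_apply, iotaMap'_apply, iotaMap'_apply, ← mul_assoc, ← sgn_add,
    List.append_assoc, epsK_append, epsK_append]
  congr 1
  exact sgn_congr ⟨-(epsK dg z * (epsK dg y + dgO dg a)), by ring⟩

/-- The map `η⊗1⊗1 : BĀ⊗A⊗BĀ → A⊗BĀ`, where `η` is the counit of `BĀ`: it reads off the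
coefficients at the generators `[]⊗a⊗[w]`. -/
noncomputable def leftCounit : Tch' κ S →ₗ[S] Cch κ S :=
  Finsupp.lcomapDomain (Prod.mk []) (Prod.mk_right_injective [])

theorem leftCounit_apply (f : Tch' κ S) (a : Option κ) (w : List κ) :
    leftCounit f (a, w) = f ([], a, w) :=
  rfl

theorem leftInverse_leftCounit_iotaMap' :
    Function.LeftInverse (leftCounit (S := S)) (iotaMap' S dg) := by
  intro f
  ext ⟨a, w⟩
  rw [leftCounit_apply, iotaMap'_apply, epsK_nil, mul_zero, sgn_zero, one_mul, List.append_nil]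

theorem iotaMap'_leftCounit {f : Tch' κ S} (hf : coactR S f = coactLS S dg f) :
    iotaMap' S dg (leftCounit f) = f := by
  ext ⟨z, a, y⟩
  have coeff := DFunLike.congr_fun hf ([], a, y, z)
  rw [coactR_apply, coactLS_apply, List.append_nil, epsK_nil] at coeff
  rw [iotaMap'_apply, leftCounit_apply, coeff, ← mul_assoc, ← sgn_add,
    sgn_congr (n := 0) ⟨epsK dg z * (epsK dg y + dgO dg a), by ring⟩, sgn_zero, one_mul]

end NC

open NC in
theorem statement4_general {S : Type} [CommRing S] {κ : Type} (dg : κ → ℤ) :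
    Function.Injective (iotaMap' S dg) ∧
      LinearMap.range (iotaMap' S dg) = LinearMap.ker (coactR S - coactLS S dg) := by
  refine ⟨(leftInverse_leftCounit_iotaMap' dg).injective, ?_⟩
  ext f
  rw [LinearMap.mem_range, LinearMap.mem_ker, LinearMap.sub_apply, sub_eq_zero]
  constructor
  · rintro ⟨g, rfl⟩
    exact coactR_iotaMap' dg g
  · exact fun hf => ⟨leftCounit f, iotaMap'_leftCounit dg hf⟩

open NC in
/-- Let `(A,b)` be a unital curved A∞-algebra over a field `k` of characteristic
`0` and `Ā = A/k·1_A`.  The map `S_{312}∘(1_A⊗Δ_{BĀ}) : A⊗BĀ → BĀ⊗A⊗BĀ`, which sends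
`a⊗[a₁|…|aₙ]` to `Σᵢ (−1)^{(ε_i+|a|)(ε_n−ε_i)} [a_{i+1}|…|aₙ]⊗a⊗[a₁|…|a_i]`, is injective,
and its image is exactly `Φ(A) := Ker(Δ^R − S_{2341}∘Δ^L)`. -/
theorem statement4 {k : Type} [Field k] [CharZero k] {κ : Type} (dg : κ → ℤ)
    (b : List (Option κ) → Avs κ k) (hb : IsUnitalCurvedAInf k dg b) :
    Function.Injective (iotaMap' k dg (κ := κ)) ∧
      LinearMap.range (iotaMap' k dg (κ := κ)) =
        LinearMap.ker (coactR k (κ := κ) - coactLS k dg) :=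
  statement4_general dg
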